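/- In the braid group B_n (n ≥ 3), the square of the Garside element Δ, i.e. Δ² = (σ₁σ₂⋯σ_{n-1})ⁿ, generates the center of B_n. -/

import Mathlib

/-- The braid relations on `n` strands, as elements of the free group on the
standard generators `σ₁, …, σ_{n-1}` (indexed by `Fin (n-1)`). -/
def braidRels (n : ℕ) : Set (FreeGroup (Fin (n - 1))) :=
  {r | (∃ i j : Fin (n - 1), (i : ℕ) + 1 < (j : ℕ) ∧
          r = FreeGroup.of i * FreeGroup.of j * (FreeGroup.of i)⁻¹ * (FreeGroup.of j)⁻¹) ∨
       (∃ i j : Fin (n - 1), (i : ℕ) + 1 = (j : ℕ) ∧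
          r = FreeGroup.of i * FreeGroup.of j * FreeGroup.of i *
              (FreeGroup.of j * FreeGroup.of i * FreeGroup.of j)⁻¹)}

/-- The Artin braid group on `n` strands. -/
def BraidGroup (n : ℕ) := PresentedGroup (braidRels n)

instance (n : ℕ) : Group (BraidGroup n) := by unfold BraidGroup; infer_instance

/-- The standard Artin generator `σ_{i+1}` (0-indexed by `i : Fin (n-1)`). -/
def σ {n : ℕ} (i : Fin (n - 1)) : BraidGroup n := PresentedGroup.of i

/-- The Garside half-twist `Δ = (σ₁)(σ₂σ₁)⋯(σ_{n-1}⋯σ₁)`. -/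
def halfTwist (n : ℕ) : BraidGroup n :=
  ((List.finRange (n - 1)).map (fun k =>
    ((((List.finRange (n - 1)).filter (· ≤ k)).reverse).map σ).prod)).prod

/-!
The proof is Garside's. In the monoid of positive braids, an equation `a x = b y` between positive
words with first letters `a` and `b` is always a consequence of the relation joining `a` and `b`;
this makes the monoid left cancellative and lets one compute least common right multiples. The
element `Δ` is the least common right multiple of all the generators, and moving a generator past
it reverses the order of the indices, so `Δ²` is central. Call a positive element quasi-central if
each generator moves past it to become a generator. A nontrivial quasi-central element is divisible
by one generator, hence by its neighbours, hence by all of them, hence by `Δ`, and the quotient by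
`Δ` is again quasi-central; so by induction on length it is a power of `Δ`. An odd power exchanges
`σ₁` and `σ_{n-1}`, hence the center of the monoid consists of the powers of `Δ²`. Inverting `Δ²`
embeds the monoid into a monoid where all generators are units, so it embeds into the braid group
as well, and every braid becomes positive after multiplication by a power of `Δ²`, which carries
the result over to the group.
-/

section CentralElements

universe u

variable {M : Type u} [Monoid M] {z : M}

theorem exists_dvd_pow_of_closure_eq_top {T : Set M} (hT : Submonoid.closure T = ⊤)
    (hz : z ∈ Submonoid.center M) (hdvd : ∀ t ∈ T, t ∣ z) (m : M) : ∃ k : ℕ, m ∣ z ^ k := by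
  have hm : m ∈ Submonoid.closure T := hT ▸ Submonoid.mem_top m
  induction hm using Submonoid.closure_induction with
  | mem t ht => exact ⟨1, by simpa using hdvd t ht⟩
  | one => exact ⟨0, one_dvd _⟩
  | mul x y _ _ hx hy =>
    obtain ⟨k, c, hc⟩ := hx
    obtain ⟨l, d, hd⟩ := hy
    refine ⟨l + k, d * c, ?_⟩
    calc z ^ (l + k) = z ^ l * x * c := by rw [pow_add, hc, mul_assoc]
      _ = x * z ^ l * c := by rw [Submonoid.mem_center_iff.1 (pow_mem hz l) x]
      _ = x * y * (d * c) := by rw [hd]; simp only [mul_assoc]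

/-- The powers of a central element form an Ore set, each denominator commuting with each
numerator. -/
abbrev oreSetPowersOfMemCenter (hz : z ∈ Submonoid.center M) :
    OreLocalization.OreSet (Submonoid.powers z) where
  ore_right_cancel x y s hxy := by
    have hs := Submonoid.mem_center_iff.1 (Submonoid.powers_le.2 hz s.2)
    exact ⟨s, by rw [← hs, ← hs, hxy]⟩
  oreNum x _ := x
  oreDenom _ s := s
  ore_eq x s := (Submonoid.mem_center_iff.1 (Submonoid.powers_le.2 hz s.2) x).symm

theorem exists_injective_isUnit_map_of_mem_center [IsLeftCancelMul M]
    (hz : z ∈ Submonoid.center M) :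
    ∃ (L : Type u) (_ : Monoid L) (f : M →* L), Function.Injective f ∧ IsUnit (f z) := by
  let _ := oreSetPowersOfMemCenter hz
  refine ⟨OreLocalization (Submonoid.powers z) M, inferInstance, OreLocalization.numeratorHom,
    fun x y hxy => ?_, OreLocalization.numerator_isUnit ⟨z, Submonoid.mem_powers z⟩⟩
  obtain ⟨u, v, huv, hu⟩ := OreLocalization.oreDiv_eq_iff.1 hxy
  simp only [OneMemClass.coe_one, mul_one] at hu
  rw [Submonoid.smul_def, smul_eq_mul, smul_eq_mul, ← hu] at huv
  exact (mul_left_cancel huv).symm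

theorem isUnit_map_of_dvd_of_mem_center [IsLeftCancelMul M] {L : Type*} [Monoid L] {f : M →* L}
    (hz : z ∈ Submonoid.center M) (hfz : IsUnit (f z)) {x : M} (hx : x ∣ z) : IsUnit (f x) := by
  obtain ⟨c, rfl⟩ := hx
  have hcx : c * x = x * c :=
    mul_left_cancel (a := x) (by rw [← mul_assoc, Submonoid.mem_center_iff.1 hz x])
  obtain ⟨u, hu⟩ := hfz
  rw [map_mul] at hu
  refine isUnit_iff_exists_and_exists.2 ⟨⟨f c * ↑u⁻¹, ?_⟩, ⟨↑u⁻¹ * f c, ?_⟩⟩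
  · rw [← mul_assoc, ← hu, Units.mul_inv]
  · rw [mul_assoc, ← map_mul, hcx, map_mul, ← hu, Units.inv_mul]

variable {G : Type*} [Group G] {f : M →* G}

theorem map_mem_center_of_closure_range_eq_top (hf : Subgroup.closure (Set.range f) = ⊤)
    (hz : z ∈ Submonoid.center M) : f z ∈ Subgroup.center G := by
  rw [← Subgroup.centralizer_univ, ← Subgroup.coe_top, ← hf, Subgroup.centralizer_closure]
  rintro _ ⟨m, rfl⟩
  rw [← map_mul, ← map_mul, Submonoid.mem_center_iff.1 hz]

theorem exists_mul_pow_eq_map (hf : Subgroup.closure (Set.range f) = ⊤)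
    (hz : z ∈ Submonoid.center M) (hdvd : ∀ m : M, ∃ k : ℕ, m ∣ z ^ k) (g : G) :
    ∃ (k : ℕ) (m : M), g * f z ^ k = f m := by
  have hfz := map_mem_center_of_closure_range_eq_top hf hz
  have hcomm (k : ℕ) := Subgroup.mem_center_iff.1 (pow_mem hfz k)
  have hg : g ∈ Subgroup.closure (Set.range f) := hf ▸ Subgroup.mem_top g
  induction hg using Subgroup.closure_induction with
  | mem x hx =>
    obtain ⟨m, rfl⟩ := hx
    exact ⟨0, m, by simp⟩
  | one => exact ⟨0, 1, by simp⟩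
  | mul x y _ _ hx hy =>
    obtain ⟨k, m, hm⟩ := hx
    obtain ⟨l, m', hm'⟩ := hy
    refine ⟨k + l, m * m', ?_⟩
    calc x * y * f z ^ (k + l) = x * (y * f z ^ k) * f z ^ l := by
          rw [pow_add]; simp only [mul_assoc]
      _ = (x * f z ^ k) * (y * f z ^ l) := by rw [hcomm k y]; simp only [mul_assoc]
      _ = f (m * m') := by rw [hm, hm', map_mul]
  | inv x _ hx =>
    obtain ⟨k, m, hm⟩ := hx
    obtain ⟨l, c, hc⟩ := hdvd m
    refine ⟨l, z ^ k * c, ?_⟩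
    rw [inv_mul_eq_iff_eq_mul, map_mul, map_pow, ← mul_assoc, hm, ← map_mul, ← hc, map_pow]

theorem center_eq_zpowers_map (hinj : Function.Injective f)
    (hf : Subgroup.closure (Set.range f) = ⊤) (hdvd : ∀ m : M, ∃ k : ℕ, m ∣ z ^ k)
    (hcenter : Submonoid.center M = Submonoid.powers z) :
    Subgroup.center G = Subgroup.zpowers (f z) := by
  have hz : z ∈ Submonoid.center M := hcenter ▸ Submonoid.mem_powers z
  have hfz := map_mem_center_of_closure_range_eq_top hf hz
  refine le_antisymm (fun g hg => ?_) (Subgroup.zpowers_le.2 hfz)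
  obtain ⟨k, m, hm⟩ := exists_mul_pow_eq_map hf hz hdvd g
  have hm_center : m ∈ Submonoid.center M := Submonoid.mem_center_iff.2 fun x => hinj <| by
    rw [map_mul, map_mul, ← hm]
    exact Subgroup.mem_center_iff.1 (mul_mem hg (pow_mem hfz k)) (f x)
  obtain ⟨l, rfl⟩ := hcenter ▸ hm_center
  refine Subgroup.mem_zpowers_iff.2 ⟨(l : ℤ) - k, ?_⟩
  rw [zpow_sub, zpow_natCast, zpow_natCast, ← map_pow, ← hm, mul_inv_cancel_right]

end CentralElements

/-- The defining relations of `ArtinMonoid G`. -/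
inductive ArtinRel {α : Type*} (G : SimpleGraph α) : FreeMonoid α → FreeMonoid α → Prop
  | comm {a b : α} (h : ¬ G.Adj a b) :
      ArtinRel G (FreeMonoid.of a * FreeMonoid.of b) (FreeMonoid.of b * FreeMonoid.of a)
  | braid {a b : α} (h : G.Adj a b) :
      ArtinRel G (FreeMonoid.of a * (FreeMonoid.of b * FreeMonoid.of a))
        (FreeMonoid.of b * (FreeMonoid.of a * FreeMonoid.of b))

/-- The Artin monoid of the simply laced Coxeter graph `G`: vertices generate it, adjacent ones
satisfy the braid relation and all others commute. -/
abbrev ArtinMonoid {α : Type*} (G : SimpleGraph α) := PresentedMonoid (ArtinRel G)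

namespace ArtinMonoid

variable {α : Type*} {G : SimpleGraph α} {a b c d e : α} {k : ℕ}

/-- The generator of `ArtinMonoid G` at the vertex `a`. -/
abbrev gen (a : α) : ArtinMonoid G := PresentedMonoid.of (ArtinRel G) a

theorem gen_mul_gen_comm (h : ¬ G.Adj a b) : (gen a * gen b : ArtinMonoid G) = gen b * gen a :=
  PresentedMonoid.mk_eq_mk_of_rel (.comm h)

theorem gen_braid (h : G.Adj a b) :
    (gen a * (gen b * gen a) : ArtinMonoid G) = gen b * (gen a * gen b) :=
  PresentedMonoid.mk_eq_mk_of_rel (.braid h)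

theorem gen_mul_gen_mul_comm (h : ¬ G.Adj a b) (x : ArtinMonoid G) :
    gen a * (gen b * x) = gen b * (gen a * x) := by
  rw [← mul_assoc, gen_mul_gen_comm h, mul_assoc]

theorem gen_braid_mul (h : G.Adj a b) (x : ArtinMonoid G) :
    gen a * (gen b * (gen a * x)) = gen b * (gen a * (gen b * x)) := by
  simpa only [mul_assoc] using congrArg (· * x) (gen_braid h)

@[elab_as_elim]
theorem gen_mul_induction {p : ArtinMonoid G → Prop} (one : p 1)
    (gen_mul : ∀ a x, p x → p (gen a * x)) (x : ArtinMonoid G) : p x := by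
  induction x using PresentedMonoid.inductionOn with | _ w
  induction w using FreeMonoid.inductionOn' with
  | one => exact one
  | of_mul a w ih => exact gen_mul a _ ih

/-- The word length, well defined because the defining relations are homogeneous. -/
def lengthHom : ArtinMonoid G →* Multiplicative ℕ :=
  PresentedMonoid.lift (fun _ => Multiplicative.ofAdd 1) (by rintro _ _ (_ | _) <;> rfl)

/-- The word length as a natural number. -/
def len (x : ArtinMonoid G) : ℕ := (lengthHom x).toAdd

theorem len_one : len (1 : ArtinMonoid G) = 0 := rfl

theorem len_gen : len (gen a : ArtinMonoid G) = 1 := rfl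

theorem len_mul (x y : ArtinMonoid G) : len (x * y) = len x + len y := by
  rw [len, map_mul, toAdd_mul, len, len]

open Classical in
/-- The right complement `a \ b` of two generators: `gen a * complement a b` is their least common
right multiple. -/
noncomputable def complement (a b : α) : ArtinMonoid G :=
  if a = b then 1 else if G.Adj a b then gen b * gen a else gen b

theorem complement_self (a : α) : (complement a a : ArtinMonoid G) = 1 := if_pos rfl

theorem complement_of_adj (h : G.Adj a b) : (complement a b : ArtinMonoid G) = gen b * gen a := by
  rw [complement, if_neg h.ne, if_pos h]

theorem complement_of_not_adj (hne : a ≠ b) (h : ¬ G.Adj a b) :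
    (complement a b : ArtinMonoid G) = gen b := by
  rw [complement, if_neg hne, if_neg h]

theorem gen_mul_complement_mul_comm (hdc : ¬ G.Adj d c) (hde : ¬ G.Adj d e) (x : ArtinMonoid G) :
    gen d * (complement c e * x) = complement c e * (gen d * x) := by
  rw [complement]
  split_ifs
  · rw [one_mul, one_mul]
  · rw [mul_assoc, gen_mul_gen_mul_comm hde, gen_mul_gen_mul_comm hdc, mul_assoc]
  · exact gen_mul_gen_mul_comm hde x

/-- The equation `gen a * x = gen b * y` holds because both sides are the same right multiple of
the least common right multiple of the two generators. -/
def FactorsThroughLcm (a : α) (x : ArtinMonoid G) (b : α) (y : ArtinMonoid G) : Prop :=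
  ∃ z, x = complement a b * z ∧ y = complement b a * z

theorem factorsThroughLcm_self_iff {x y : ArtinMonoid G} :
    FactorsThroughLcm a x a y ↔ x = y := by
  simp only [FactorsThroughLcm, complement_self, one_mul]
  exact ⟨fun ⟨_, hx, hy⟩ => hx.trans hy.symm, fun h => ⟨x, rfl, h.symm⟩⟩

theorem factorsThroughLcm_iff_of_not_adj (hne : a ≠ b) (h : ¬ G.Adj a b) {x y : ArtinMonoid G} :
    FactorsThroughLcm a x b y ↔ ∃ z, x = gen b * z ∧ y = gen a * z := by
  rw [FactorsThroughLcm, complement_of_not_adj hne h,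
    complement_of_not_adj hne.symm (mt SimpleGraph.Adj.symm h)]

theorem factorsThroughLcm_iff_of_adj (h : G.Adj a b) {x y : ArtinMonoid G} :
    FactorsThroughLcm a x b y ↔ ∃ z, x = gen b * (gen a * z) ∧ y = gen a * (gen b * z) := by
  simp only [FactorsThroughLcm, complement_of_adj h, complement_of_adj h.symm, mul_assoc]

theorem FactorsThroughLcm.symm {x y : ArtinMonoid G} (h : FactorsThroughLcm a x b y) :
    FactorsThroughLcm b y a x :=
  let ⟨z, hx, hy⟩ := h
  ⟨z, hy, hx⟩

theorem FactorsThroughLcm.mul_right {x y : ArtinMonoid G} (h : FactorsThroughLcm a x b y)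
    (t : ArtinMonoid G) : FactorsThroughLcm a (x * t) b (y * t) := by
  obtain ⟨z, rfl, rfl⟩ := h
  exact ⟨z * t, mul_assoc _ _ _, mul_assoc _ _ _⟩

/-- Garside's lemma up to length `k`, the inductive hypothesis in its proof. -/
def LcmProperty (G : SimpleGraph α) (k : ℕ) : Prop :=
  ∀ ⦃a b : α⦄ ⦃x y : ArtinMonoid G⦄, len x < k → gen a * x = gen b * y →
    FactorsThroughLcm a x b y

namespace LcmProperty

variable {x y z : ArtinMonoid G}

theorem trans_of_not_adj_of_not_adj (hk : LcmProperty G k) (hcd : c ≠ d) (hde : d ≠ e)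
    (ncd : ¬ G.Adj c d) (nde : ¬ G.Adj d e) (hy : len y ≤ k)
    (hxy : FactorsThroughLcm c x d y) (hyz : FactorsThroughLcm d y e z) :
    FactorsThroughLcm c x e z := by
  obtain ⟨u, rfl, rfl⟩ := (factorsThroughLcm_iff_of_not_adj hcd ncd).1 hxy
  obtain ⟨v, huv, rfl⟩ := (factorsThroughLcm_iff_of_not_adj hde nde).1 hyz
  rw [len_mul, len_gen] at hy
  obtain ⟨w, rfl, rfl⟩ := hk (by omega) huv
  have ndc : ¬ G.Adj d c := mt SimpleGraph.Adj.symm ncd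
  exact ⟨gen d * w, gen_mul_complement_mul_comm ndc nde w, gen_mul_complement_mul_comm nde ndc w⟩

theorem trans_of_not_adj_of_adj (hk : LcmProperty G k) (hcd : c ≠ d)
    (ncd : ¬ G.Adj c d) (ade : G.Adj d e) (hy : len y ≤ k)
    (hxy : FactorsThroughLcm c x d y) (hyz : FactorsThroughLcm d y e z) :
    FactorsThroughLcm c x e z := by
  obtain ⟨u, rfl, rfl⟩ := (factorsThroughLcm_iff_of_not_adj hcd ncd).1 hxy
  obtain ⟨v, huv, rfl⟩ := (factorsThroughLcm_iff_of_adj ade).1 hyz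
  rw [len_mul, len_gen] at hy
  have hce : c ≠ e := by rintro rfl; exact ncd ade.symm
  have hu := hk (by omega) huv
  by_cases ace : G.Adj c e
  · obtain ⟨p, rfl, hvp⟩ := (factorsThroughLcm_iff_of_adj ace).1 hu
    simp only [len_mul, len_gen] at hy
    obtain ⟨q, hpq, rfl⟩ := (factorsThroughLcm_iff_of_not_adj hcd ncd).1
      (hk (by rw [len_mul, len_gen]; omega) hvp.symm)
    obtain ⟨r, rfl, rfl⟩ := (factorsThroughLcm_iff_of_adj ade.symm).1 (hk (by omega) hpq)
    refine (factorsThroughLcm_iff_of_adj ace).2 ⟨gen d * (gen e * (gen c * r)), ?_, ?_⟩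
    · rw [gen_mul_gen_mul_comm ncd, gen_braid_mul ade, ← gen_braid_mul ace,
        gen_mul_gen_mul_comm ncd]
    · rw [← gen_braid_mul ace, ← gen_mul_gen_mul_comm ncd, ← gen_braid_mul ade,
        ← gen_mul_gen_mul_comm ncd]
  · obtain ⟨p, rfl, hvp⟩ := (factorsThroughLcm_iff_of_not_adj hce ace).1 hu
    rw [len_mul, len_gen] at hy
    obtain ⟨q, rfl, rfl⟩ := (factorsThroughLcm_iff_of_not_adj hcd ncd).1
      (hk (by omega) hvp.symm)
    refine (factorsThroughLcm_iff_of_not_adj hce ace).2 ⟨gen d * (gen e * q), ?_, ?_⟩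
    · rw [gen_braid_mul ade]
    · rw [gen_mul_gen_mul_comm ncd, gen_mul_gen_mul_comm ace]

theorem trans_of_adj_of_adj (hk : LcmProperty G k) (hG : G.CliqueFree 3)
    (acd : G.Adj c d) (ade : G.Adj d e) (hy : len y ≤ k)
    (hxy : FactorsThroughLcm c x d y) (hyz : FactorsThroughLcm d y e z) :
    FactorsThroughLcm c x e z := by
  classical
  obtain ⟨u, rfl, rfl⟩ := (factorsThroughLcm_iff_of_adj acd).1 hxy
  obtain ⟨v, huv, rfl⟩ := (factorsThroughLcm_iff_of_adj ade).1 hyz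
  simp only [len_mul, len_gen] at hy
  have hduv := hk (by rw [len_mul, len_gen]; omega) huv
  have nce : ¬ G.Adj c e := fun ace => hG _ (SimpleGraph.is3Clique_triple_iff.2 ⟨acd, ace, ade⟩)
  by_cases hce : c = e
  · subst hce
    obtain rfl : u = v :=
      factorsThroughLcm_self_iff.1 (hk (by omega) (factorsThroughLcm_self_iff.1 hduv))
    exact factorsThroughLcm_self_iff.2 rfl
  obtain ⟨p, hup, hvp⟩ := (factorsThroughLcm_iff_of_not_adj hce nce).1 hduv
  obtain ⟨q, rfl, rfl⟩ := (factorsThroughLcm_iff_of_adj ade).1 (hk (by omega) hup)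
  simp only [len_mul, len_gen] at hy
  obtain ⟨r, hqr, rfl⟩ := (factorsThroughLcm_iff_of_adj acd).1
    (hk (by simp only [len_mul, len_gen]; omega) hvp.symm)
  have heq : gen e * q = gen c * r :=
    factorsThroughLcm_self_iff.1 (hk (by rw [len_mul, len_gen]; omega) hqr)
  obtain ⟨t, rfl, rfl⟩ :=
    (factorsThroughLcm_iff_of_not_adj (Ne.symm hce) (mt SimpleGraph.Adj.symm nce)).1
      (hk (by omega) heq)
  refine (factorsThroughLcm_iff_of_not_adj hce nce).2
    ⟨gen d * (gen e * (gen c * (gen d * t))), ?_, ?_⟩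
  · rw [gen_mul_gen_mul_comm nce, gen_braid_mul acd, gen_braid_mul ade]
  · rw [← gen_mul_gen_mul_comm nce, ← gen_braid_mul ade, ← gen_braid_mul acd,
      gen_mul_gen_mul_comm nce]

-- Three distinct generators span a Coxeter graph of type `A₁ × A₁ × A₁`, `A₁ × A₂` or `A₃`;
-- being triangle-free excludes the affine type `Ã₂`.
theorem factorsThroughLcm_trans (hk : LcmProperty G k) (hG : G.CliqueFree 3) (hy : len y ≤ k)
    (hxy : FactorsThroughLcm c x d y) (hyz : FactorsThroughLcm d y e z) :
    FactorsThroughLcm c x e z := by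
  by_cases hcd : c = d
  · subst hcd
    rwa [factorsThroughLcm_self_iff.1 hxy]
  by_cases hde : d = e
  · subst hde
    rwa [← factorsThroughLcm_self_iff.1 hyz]
  by_cases acd : G.Adj c d <;> by_cases ade : G.Adj d e
  · exact hk.trans_of_adj_of_adj hG acd ade hy hxy hyz
  · exact (hk.trans_of_not_adj_of_adj (Ne.symm hde) (mt SimpleGraph.Adj.symm ade) acd.symm hy
      hyz.symm hxy.symm).symm
  · exact hk.trans_of_not_adj_of_adj hcd acd ade hy hxy hyz
  · exact hk.trans_of_not_adj_of_not_adj hcd hde acd ade hy hxy hyz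

end LcmProperty

/-- Two words are both empty, or their first letters and remaining parts are related by
`FactorsThroughLcm`. -/
def HeadsCompatible (G : SimpleGraph α) (u v : FreeMonoid α) : Prop :=
  (u = 1 ∧ v = 1) ∨ ∃ a x b y, u = FreeMonoid.of a * x ∧ v = FreeMonoid.of b * y ∧
    FactorsThroughLcm a (PresentedMonoid.mk (ArtinRel G) x) b (PresentedMonoid.mk (ArtinRel G) y)

namespace HeadsCompatible

variable {u v w : FreeMonoid α}

theorem of_rel (h : ArtinRel G u v) : HeadsCompatible G u v := by
  refine Or.inr ?_
  cases h with
  | @comm a b h =>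
    refine ⟨a, _, b, _, rfl, rfl, ?_⟩
    by_cases hab : a = b
    · subst hab
      exact factorsThroughLcm_self_iff.2 rfl
    · exact (factorsThroughLcm_iff_of_not_adj hab h).2 ⟨1, (mul_one _).symm, (mul_one _).symm⟩
  | @braid a b h =>
    exact ⟨a, _, b, _, rfl, rfl, (factorsThroughLcm_iff_of_adj h).2
      ⟨1, by rw [mul_one, map_mul]; rfl, by rw [mul_one, map_mul]; rfl⟩⟩

theorem refl (u : FreeMonoid α) : HeadsCompatible G u u := by
  cases u using FreeMonoid.casesOn with
  | one => exact Or.inl ⟨rfl, rfl⟩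
  | of_mul a x => exact Or.inr ⟨a, x, a, x, rfl, rfl, factorsThroughLcm_self_iff.2 rfl⟩

theorem symm (h : HeadsCompatible G u v) : HeadsCompatible G v u := by
  rcases h with ⟨hu, hv⟩ | ⟨a, x, b, y, hu, hv, hxy⟩
  · exact Or.inl ⟨hv, hu⟩
  · exact Or.inr ⟨b, y, a, x, hv, hu, hxy.symm⟩

theorem factorsThroughLcm {x y : FreeMonoid α}
    (h : HeadsCompatible G (FreeMonoid.of a * x) (FreeMonoid.of b * y)) :
    FactorsThroughLcm a (PresentedMonoid.mk (ArtinRel G) x)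
      b (PresentedMonoid.mk (ArtinRel G) y) := by
  rcases h with ⟨hx, -⟩ | ⟨a', x', b', y', hx, hy, h⟩
  · exact absurd hx (List.cons_ne_nil a x)
  · obtain ⟨rfl, rfl⟩ := List.cons.inj hx
    obtain ⟨rfl, rfl⟩ := List.cons.inj hy
    exact h

theorem trans (hk : LcmProperty G k) (hG : G.CliqueFree 3)
    (hv : len (PresentedMonoid.mk (ArtinRel G) v) ≤ k + 1)
    (huv : HeadsCompatible G u v) (hvw : HeadsCompatible G v w) : HeadsCompatible G u w := by
  rcases huv with ⟨rfl, rfl⟩ | ⟨a, x, b, y, rfl, rfl, hxy⟩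
  · exact hvw
  rcases hvw with ⟨hy, -⟩ | ⟨b', y', c, z, hy, rfl, hyz⟩
  · exact absurd hy (List.cons_ne_nil b y)
  obtain ⟨rfl, rfl⟩ := List.cons.inj hy
  rw [map_mul, len_mul, ← PresentedMonoid.of, len_gen] at hv
  exact Or.inr ⟨a, x, c, z, rfl, rfl, hk.factorsThroughLcm_trans hG (by omega) hxy hyz⟩

theorem mul {u' v' : FreeMonoid α} (huv : HeadsCompatible G u v) (huv' : HeadsCompatible G u' v')
    (hmk : PresentedMonoid.mk (ArtinRel G) u' = PresentedMonoid.mk (ArtinRel G) v') :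
    HeadsCompatible G (u * u') (v * v') := by
  rcases huv with ⟨rfl, rfl⟩ | ⟨a, x, b, y, rfl, rfl, hxy⟩
  · simpa only [one_mul] using huv'
  · refine Or.inr ⟨a, x * u', b, y * v', mul_assoc _ _ _, mul_assoc _ _ _, ?_⟩
    rw [map_mul, map_mul, hmk]
    exact hxy.mul_right _

theorem of_conGen (hk : LcmProperty G k) (hG : G.CliqueFree 3) (h : ConGen.Rel (ArtinRel G) u v)
    (hu : len (PresentedMonoid.mk (ArtinRel G) u) ≤ k + 1) : HeadsCompatible G u v := by
  have mk_eq {u v} (h : ConGen.Rel (ArtinRel G) u v) :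
      PresentedMonoid.mk (ArtinRel G) u = PresentedMonoid.mk (ArtinRel G) v :=
    PresentedMonoid.mk_eq_mk_iff.2 h
  induction h with
  | of u v h => exact of_rel h
  | refl u => exact refl u
  | symm h ih => exact (ih (mk_eq h ▸ hu)).symm
  | trans h _ ih ih' =>
    have hv := mk_eq h ▸ hu
    exact trans hk hG hv (ih hu) (ih' hv)
  | mul _ h' ih ih' =>
    rw [map_mul, len_mul] at hu
    exact (ih (by omega)).mul (ih' (by omega)) (mk_eq h')

end HeadsCompatible

theorem lcmProperty (hG : G.CliqueFree 3) (k : ℕ) : LcmProperty G k := by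
  induction k with
  | zero => exact fun _ _ _ _ hx => absurd hx (Nat.not_lt_zero _)
  | succ k ih =>
    intro a b x y hx hxy
    induction x, y using PresentedMonoid.inductionOn₂ with | _ u v
    refine (HeadsCompatible.of_conGen ih hG
      (PresentedMonoid.mk_eq_mk_iff.1 hxy) ?_).factorsThroughLcm
    rw [map_mul, len_mul, ← PresentedMonoid.of, len_gen]
    omega

theorem factorsThroughLcm_of_gen_mul_eq (hG : G.CliqueFree 3) {x y : ArtinMonoid G}
    (h : gen a * x = gen b * y) : FactorsThroughLcm a x b y :=
  lcmProperty hG _ (Nat.lt_succ_self _) h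

theorem gen_injective (hG : G.CliqueFree 3) : Function.Injective (gen : α → ArtinMonoid G) := by
  intro a b hab
  obtain ⟨z, hz, -⟩ := factorsThroughLcm_of_gen_mul_eq hG (congrArg (· * 1) hab)
  by_contra hne
  have hlen := congrArg len hz
  rw [complement, if_neg hne, len_one] at hlen
  split_ifs at hlen <;> simp only [len_mul, len_gen] at hlen <;> omega

theorem isLeftCancelMul (hG : G.CliqueFree 3) : IsLeftCancelMul (ArtinMonoid G) where
  mul_left_cancel w x y hxy := by
    induction w using gen_mul_induction with
    | one => simpa only [one_mul] using hxy
    | gen_mul a w ih =>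
      simp only [mul_assoc] at hxy
      exact ih (factorsThroughLcm_self_iff.1 (factorsThroughLcm_of_gen_mul_eq hG hxy))

theorem exists_eq_gen_mul_of_adj (hG : G.CliqueFree 3) (hab : G.Adj a b) {x y : ArtinMonoid G}
    (h : gen a * x = gen b * y) : ∃ z, x = gen b * (gen a * z) ∧ y = gen a * (gen b * z) :=
  (factorsThroughLcm_iff_of_adj hab).1 (factorsThroughLcm_of_gen_mul_eq hG h)

theorem gen_dvd_of_gen_dvd_gen_mul (hG : G.CliqueFree 3) (hne : a ≠ b) (hab : ¬ G.Adj a b)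
    {x : ArtinMonoid G} (h : gen b ∣ gen a * x) : gen b ∣ x := by
  obtain ⟨y, hy⟩ := h
  obtain ⟨z, hz, -⟩ := (factorsThroughLcm_iff_of_not_adj hne hab).1
    (factorsThroughLcm_of_gen_mul_eq hG hy)
  exact ⟨z, hz⟩

/-- `z` moves past each generator at the cost of replacing it by some generator. -/
def IsQuasiCentral (z : ArtinMonoid G) : Prop := ∀ a, ∃ b, gen a * z = z * gen b

namespace IsQuasiCentral

variable {z : ArtinMonoid G}

theorem gen_dvd_of_adj (hz : IsQuasiCentral z) (hG : G.CliqueFree 3) (hab : G.Adj a b)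
    (ha : gen a ∣ z) : gen b ∣ z := by
  have := isLeftCancelMul hG
  obtain ⟨w, rfl⟩ := ha
  obtain ⟨a', ha'⟩ := hz a
  obtain ⟨b', hb'⟩ := hz b
  rw [mul_assoc (gen a)] at ha' hb'
  obtain ⟨t, ht, -⟩ := exists_eq_gen_mul_of_adj hG hab.symm hb'
  have hw : w = gen b * t := mul_left_cancel ht
  rw [mul_left_cancel ha', hw, mul_assoc]
  exact dvd_mul_right _ _

theorem gen_dvd_of_preconnected (hz : IsQuasiCentral z) (hG : G.CliqueFree 3)
    (hconn : G.Preconnected) (ha : gen a ∣ z) (b : α) : gen b ∣ z := by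
  obtain ⟨walk⟩ := hconn a b
  induction walk with
  | nil => exact ha
  | cons h _ ih => exact ih (hz.gen_dvd_of_adj hG h ha)

end IsQuasiCentral

end ArtinMonoid

section BraidSequences

variable {M : Type*} [Monoid M]

theorem semiconjBy_list_prod_map {ι : Type*} {a : M} {f g : ι → M} {l : List ι}
    (h : ∀ i ∈ l, SemiconjBy a (f i) (g i)) : SemiconjBy a (l.map f).prod (l.map g).prod := by
  induction l with
  | nil => exact SemiconjBy.one_right a
  | cons i l ih =>
    rw [List.forall_mem_cons] at h
    simpa only [List.map_cons, List.prod_cons] using h.1.mul_right (ih h.2)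

/-- The ascending product `s 0 * s 1 * ⋯ * s (k - 1)`. -/
def ascProd (s : ℕ → M) (k : ℕ) : M := ((List.range k).map s).prod

/-- The descending product `s (k - 1) * ⋯ * s 1 * s 0`. -/
def descProd (s : ℕ → M) (k : ℕ) : M := ((List.range k).reverse.map s).prod

/-- The Garside element `(s 0) * (s 1 * s 0) * ⋯ * (s (k - 1) * ⋯ * s 0)` on `k` generators. -/
def garsideProd (s : ℕ → M) (k : ℕ) : M := ((List.range k).map fun i => descProd s (i + 1)).prod

variable {s : ℕ → M} {N i j k : ℕ} {x : M}

theorem ascProd_zero : ascProd s 0 = 1 := rfl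

theorem ascProd_succ : ascProd s (k + 1) = ascProd s k * s k := List.prod_range_succ s k

theorem ascProd_succ' : ascProd s (k + 1) = s 0 * ascProd (fun i => s (i + 1)) k :=
  List.prod_range_succ' s k

theorem descProd_zero : descProd s 0 = 1 := rfl

theorem descProd_succ : descProd s (k + 1) = s k * descProd s k := by
  rw [descProd, List.range_succ, List.reverse_concat, List.map_cons, List.prod_cons, descProd]

theorem descProd_succ' : descProd s (k + 1) = descProd (fun i => s (i + 1)) k * s 0 := by
  rw [descProd, List.range_succ_eq_map, List.reverse_cons, List.map_append, List.prod_append,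
    List.map_reverse, List.map_map, ← List.map_reverse, List.map_singleton, List.prod_singleton]
  rfl

theorem garsideProd_zero : garsideProd s 0 = 1 := rfl

theorem garsideProd_one : garsideProd s 1 = s 0 := by simp [garsideProd, descProd]

theorem garsideProd_succ : garsideProd s (k + 1) = garsideProd s k * descProd s (k + 1) :=
  List.prod_range_succ _ k

theorem map_ascProd {M' : Type*} [Monoid M'] (f : M →* M') :
    f (ascProd s k) = ascProd (fun i => f (s i)) k := by
  rw [ascProd, map_list_prod, List.map_map]
  rfl

theorem map_descProd {M' : Type*} [Monoid M'] (f : M →* M') :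
    f (descProd s k) = descProd (fun i => f (s i)) k := by
  rw [descProd, map_list_prod, List.map_map]
  rfl

theorem map_garsideProd {M' : Type*} [Monoid M'] (f : M →* M') :
    f (garsideProd s k) = garsideProd (fun i => f (s i)) k := by
  simp only [garsideProd, map_list_prod, List.map_map, Function.comp_def, map_descProd]

theorem ascProd_mem_closure : ascProd s k ∈ Submonoid.closure (s '' Set.Iio k) := by
  refine list_prod_mem (List.forall_mem_map.2 fun i hi => Submonoid.subset_closure ⟨i, ?_, rfl⟩)
  exact List.mem_range.1 hi

theorem descProd_mem_closure : descProd s k ∈ Submonoid.closure (s '' Set.Iio k) := by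
  refine list_prod_mem (List.forall_mem_map.2 fun i hi => Submonoid.subset_closure ⟨i, ?_, rfl⟩)
  exact List.mem_range.1 (List.mem_reverse.1 hi)

theorem garsideProd_mem_closure : garsideProd s k ∈ Submonoid.closure (s '' Set.Iio k) := by
  refine list_prod_mem (List.forall_mem_map.2 fun i hi => ?_)
  have hik : i + 1 ≤ k := List.mem_range.1 hi
  exact Submonoid.closure_mono (Set.image_mono (Set.Iio_subset_Iio hik)) descProd_mem_closure

/-- The first `N` terms of `s` satisfy the braid relations. -/
structure IsBraidSeq (s : ℕ → M) (N : ℕ) : Prop where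
  commute {i j : ℕ} : i + 1 < j → j < N → Commute (s i) (s j)
  braid {i : ℕ} : i + 1 < N → s i * (s (i + 1) * s i) = s (i + 1) * (s i * s (i + 1))

namespace IsBraidSeq

theorem commute_of_mem_closure (hs : IsBraidSeq s N) (hkj : k < j) (hj : j < N)
    (hx : x ∈ Submonoid.closure (s '' Set.Iio k)) : Commute x (s j) := by
  induction hx using Submonoid.closure_induction with
  | mem _ hx =>
    obtain ⟨i, hi, rfl⟩ := hx
    exact hs.commute (lt_of_le_of_lt (Nat.succ_le_of_lt hi) hkj) hj
  | one => exact Commute.one_left _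
  | mul _ _ _ _ hx hy => exact hx.mul_left hy

theorem semiconjBy_ascProd (hs : IsBraidSeq s N) (hk : k ≤ N) (hi : i + 1 < k) :
    SemiconjBy (ascProd s k) (s i) (s (i + 1)) := by
  induction k with
  | zero => omega
  | succ k ih =>
    rw [ascProd_succ]
    obtain hik | rfl : i + 1 < k ∨ k = i + 1 := by omega
    · exact (ih (by omega) hik).mul_left (hs.commute hik (by omega)).symm
    · have hcomm : Commute (ascProd s i) (s (i + 1)) :=
        hs.commute_of_mem_closure i.lt_succ_self (by omega) ascProd_mem_closure
      have hbraid : SemiconjBy (s i * s (i + 1)) (s i) (s (i + 1)) := by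
        rw [SemiconjBy, mul_assoc, hs.braid (by omega)]
      rw [ascProd_succ, mul_assoc]
      exact SemiconjBy.mul_left hcomm hbraid

theorem semiconjBy_descProd (hs : IsBraidSeq s N) (hk : k ≤ N) (hi : i + 1 < k) :
    SemiconjBy (descProd s k) (s (i + 1)) (s i) := by
  induction k with
  | zero => omega
  | succ k ih =>
    rw [descProd_succ]
    obtain hik | rfl : i + 1 < k ∨ k = i + 1 := by omega
    · exact SemiconjBy.mul_left (hs.commute hik (by omega)).symm (ih (by omega) hik)
    · have hcomm : Commute (descProd s i) (s (i + 1)) :=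
        hs.commute_of_mem_closure i.lt_succ_self (by omega) descProd_mem_closure
      have hbraid : SemiconjBy (s (i + 1) * s i) (s (i + 1)) (s i) := by
        rw [SemiconjBy, mul_assoc, hs.braid (by omega)]
      rw [descProd_succ, ← mul_assoc]
      exact hbraid.mul_left hcomm

theorem garsideProd_succ_eq_ascProd_mul (hs : IsBraidSeq s N) (hk : k < N) :
    garsideProd s (k + 1) = ascProd s (k + 1) * garsideProd s k := by
  induction k with
  | zero => rfl
  | succ k ih =>
    have hcomm : Commute (garsideProd s k) (s (k + 1)) :=
      hs.commute_of_mem_closure k.lt_succ_self hk garsideProd_mem_closure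
    calc garsideProd s (k + 1 + 1)
        = ascProd s (k + 1) * (garsideProd s k * s (k + 1)) * descProd s (k + 1) := by
          rw [garsideProd_succ, ih (by omega), descProd_succ]
          simp only [mul_assoc]
      _ = ascProd s (k + 1) * s (k + 1) * (garsideProd s k * descProd s (k + 1)) := by
          rw [hcomm.eq]
          simp only [mul_assoc]
      _ = ascProd s (k + 1 + 1) * garsideProd s (k + 1) := by
          rw [← ascProd_succ, ← garsideProd_succ]

theorem semiconjBy_garsideProd (hs : IsBraidSeq s N) (hk : k ≤ N) (hij : i + j + 1 = k) :
    SemiconjBy (garsideProd s k) (s i) (s j) := by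
  induction k generalizing i j with
  | zero => omega
  | succ k ih =>
    match i, j with
    | 0, 0 =>
      obtain rfl : k = 0 := by omega
      rw [garsideProd_one]
      exact Commute.refl (s 0)
    | 0, j + 1 =>
      rw [hs.garsideProd_succ_eq_ascProd_mul hk]
      exact (hs.semiconjBy_ascProd hk (by omega)).mul_left (ih (by omega) (by omega))
    | i + 1, j =>
      rw [garsideProd_succ]
      exact (ih (by omega) (by omega)).mul_left (hs.semiconjBy_descProd hk (by omega))

theorem dvd_garsideProd (hs : IsBraidSeq s N) (hk : k ≤ N) (hi : i < k) :
    s i ∣ garsideProd s k := by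
  induction k generalizing i with
  | zero => omega
  | succ k ih =>
    obtain hik | rfl : i < k ∨ i = k := by omega
    · exact garsideProd_succ (s := s) ▸ dvd_mul_of_dvd_left (ih (by omega) hik) _
    obtain _ | i := i
    · exact dvd_of_eq garsideProd_one.symm
    obtain ⟨c, hc⟩ := ih (by omega) i.lt_succ_self
    have hshift := hs.semiconjBy_ascProd hk (i + 1).lt_succ_self
    rw [hs.garsideProd_succ_eq_ascProd_mul hk, hc, ← mul_assoc, hshift.eq, mul_assoc]
    exact dvd_mul_right _ _

theorem commute_garsideProd_sq (hs : IsBraidSeq s N) (hi : i < N) :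
    Commute (garsideProd s N ^ 2) (s i) := by
  have hflip {i j : ℕ} := hs.semiconjBy_garsideProd (i := i) (j := j) le_rfl
  rw [sq]
  exact (hflip (i := N - 1 - i) (by omega)).mul_left (hflip (by omega))

theorem ascProd_pow_mul_descProd (hs : IsBraidSeq s N) (hk : k < N) (hij : i + j = k + 1) :
    ascProd s (k + 1) ^ j * descProd s i = ascProd s k ^ j * descProd s (k + 1) := by
  have hasc : SemiconjBy (descProd s (k + 1)) (ascProd (fun m => s (m + 1)) k) (ascProd s k) :=
    semiconjBy_list_prod_map fun m hm => hs.semiconjBy_descProd hk (by simpa using hm)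
  induction j generalizing i with
  | zero => rw [pow_zero, pow_zero, ← hij, add_zero]
  | succ j ih =>
    have hdesc : SemiconjBy (ascProd s (k + 1)) (descProd s i) (descProd (fun m => s (m + 1)) i) :=
      semiconjBy_list_prod_map fun m hm => hs.semiconjBy_ascProd hk <| by
        have := List.mem_range.1 (List.mem_reverse.1 hm)
        omega
    calc ascProd s (k + 1) ^ (j + 1) * descProd s i
        = ascProd s (k + 1) ^ j * (descProd (fun m => s (m + 1)) i * ascProd s (k + 1)) := by
          rw [pow_succ, mul_assoc, hdesc.eq]
      _ = ascProd s (k + 1) ^ j * descProd s (i + 1) * ascProd (fun m => s (m + 1)) k := by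
          rw [ascProd_succ' (s := s) (k := k), descProd_succ']
          simp only [mul_assoc]
      _ = ascProd s k ^ (j + 1) * descProd s (k + 1) := by
          rw [ih (by omega), mul_assoc, hasc.eq, ← mul_assoc, pow_succ]

theorem garsideProd_sq (hs : IsBraidSeq s N) (hk : k ≤ N) :
    garsideProd s k ^ 2 = ascProd s k ^ (k + 1) := by
  induction k with
  | zero => rw [garsideProd_zero, ascProd_zero, one_pow, one_pow]
  | succ k ih =>
    calc garsideProd s (k + 1) ^ 2
        = ascProd s (k + 1) * (garsideProd s k ^ 2 * descProd s (k + 1)) := by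
          rw [sq]
          nth_rw 1 [hs.garsideProd_succ_eq_ascProd_mul hk]
          rw [garsideProd_succ, sq]
          simp only [mul_assoc]
      _ = ascProd s (k + 1) * ascProd s (k + 1) ^ (k + 1) := by
          rw [ih (by omega), ← hs.ascProd_pow_mul_descProd hk (zero_add (k + 1)), descProd_zero,
            mul_one]
      _ = ascProd s (k + 1) ^ (k + 1 + 1) := (pow_succ' _ _).symm

end IsBraidSeq

end BraidSequences

/-- The positive braid monoid on `N + 1` strands, with generators indexed by `Fin N`. -/
abbrev BraidMonoid (N : ℕ) := ArtinMonoid (SimpleGraph.pathGraph N)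

namespace BraidMonoid

open ArtinMonoid

variable {N i j k : ℕ} {w x z : BraidMonoid N}

theorem pathGraph_cliqueFree_three (N : ℕ) : (SimpleGraph.pathGraph N).CliqueFree 3 :=
  (SimpleGraph.pathGraph.bicoloring N).colorable.cliqueFree (by decide)

instance : IsLeftCancelMul (BraidMonoid N) := isLeftCancelMul (pathGraph_cliqueFree_three N)

/-- The generators as a sequence, extended by the junk value `1` from index `N` on. -/
def genSeq (N i : ℕ) : BraidMonoid N := if h : i < N then gen ⟨i, h⟩ else 1

theorem genSeq_of_lt (h : i < N) : genSeq N i = gen ⟨i, h⟩ := dif_pos h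

theorem genSeq_val (a : Fin N) : genSeq N a = gen a := genSeq_of_lt a.2

theorem isBraidSeq_genSeq (N : ℕ) : IsBraidSeq (genSeq N) N where
  commute {i j} hij hj := by
    rw [genSeq_of_lt hj, genSeq_of_lt (by omega : i < N)]
    exact gen_mul_gen_comm (by rw [SimpleGraph.pathGraph_adj]; dsimp only; omega)
  braid {i} hi := by
    rw [genSeq_of_lt hi, genSeq_of_lt (by omega : i < N)]
    exact gen_braid (SimpleGraph.pathGraph_adj.2 (Or.inl rfl))

theorem genSeq_dvd_of_mem_closure_of_dvd_mul (hkj : k < j) (hj : j < N)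
    (hx : x ∈ Submonoid.closure (genSeq N '' Set.Iio k)) (h : genSeq N j ∣ x * w) :
    genSeq N j ∣ w := by
  induction hx using Submonoid.closure_induction generalizing w with
  | mem _ hx =>
    obtain ⟨i, hi, rfl⟩ := hx
    have hij : i + 1 < j := lt_of_le_of_lt (Nat.succ_le_of_lt hi) hkj
    rw [genSeq_of_lt hj] at h ⊢
    rw [genSeq_of_lt (by omega : i < N)] at h
    refine gen_dvd_of_gen_dvd_gen_mul (pathGraph_cliqueFree_three N) ?_ ?_ h
    · exact Fin.ne_of_lt (Fin.mk_lt_mk.2 (by omega))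
    · rw [SimpleGraph.pathGraph_adj]
      dsimp only
      omega
  | one => rwa [one_mul] at h
  | mul _ _ _ _ hx hy => exact hy (hx (by rwa [← mul_assoc]))

theorem exists_eq_genSeq_succ_mul (hi : i + 1 < N) (h : genSeq N (i + 1) ∣ genSeq N i * w) :
    ∃ v, w = genSeq N (i + 1) * (genSeq N i * v) := by
  obtain ⟨y, hy⟩ := h
  rw [genSeq_of_lt hi, genSeq_of_lt (by omega : i < N)] at *
  obtain ⟨v, hv, -⟩ := exists_eq_gen_mul_of_adj (pathGraph_cliqueFree_three N)
    (SimpleGraph.pathGraph_adj.2 (Or.inl rfl)) hy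
  exact ⟨v, hv⟩

theorem garsideProd_succ_dvd (hk : k < N) (hdvd : garsideProd (genSeq N) k ∣ z)
    (hgen : genSeq N k ∣ z) : garsideProd (genSeq N) (k + 1) ∣ z := by
  have hs := isBraidSeq_genSeq N
  induction k generalizing z with
  | zero => rwa [garsideProd_one]
  | succ k ih =>
    have hcomm : Commute (garsideProd (genSeq N) k) (genSeq N (k + 1)) :=
      hs.commute_of_mem_closure k.lt_succ_self hk garsideProd_mem_closure
    obtain ⟨w, rfl⟩ := hdvd
    have hlcm : genSeq N (k + 1) ∣ genSeq N k * (garsideProd (genSeq N) k * w) := by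
      refine genSeq_dvd_of_mem_closure_of_dvd_mul k.lt_succ_self hk ascProd_mem_closure ?_
      simpa only [hs.garsideProd_succ_eq_ascProd_mul (by omega : k < N), ascProd_succ,
        mul_assoc] using hgen
    obtain ⟨v, hv⟩ := exists_eq_genSeq_succ_mul hk hlcm
    obtain ⟨w, rfl⟩ := genSeq_dvd_of_mem_closure_of_dvd_mul k.lt_succ_self hk
      garsideProd_mem_closure ⟨_, hv⟩
    rw [hcomm.left_comm] at hv
    obtain ⟨u, hu⟩ := ih (by omega) (dvd_mul_right _ w) ⟨v, mul_left_cancel hv⟩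
    rw [garsideProd_succ, mul_assoc] at hu
    rw [mul_left_cancel hu, garsideProd_succ (k := k + 1), descProd_succ (k := k + 1)]
    exact ⟨u, by simp only [mul_assoc]⟩

/-- The Garside element `Δ` of the braid monoid. -/
def garside (N : ℕ) : BraidMonoid N := garsideProd (genSeq N) N

theorem garside_dvd_of_forall_gen_dvd (h : ∀ a, gen a ∣ z) : garside N ∣ z := by
  suffices ∀ k ≤ N, garsideProd (genSeq N) k ∣ z from this N le_rfl
  intro k hk
  induction k with
  | zero => exact one_dvd z
  | succ k ih => exact garsideProd_succ_dvd hk (ih (by omega)) (genSeq_of_lt hk ▸ h _)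

theorem gen_dvd_garside (a : Fin N) : gen a ∣ garside N :=
  genSeq_val a ▸ (isBraidSeq_genSeq N).dvd_garsideProd le_rfl a.2

theorem semiconjBy_garside (a : Fin N) : SemiconjBy (garside N) (gen a) (gen a.rev) := by
  rw [← genSeq_val, ← genSeq_val]
  exact (isBraidSeq_genSeq N).semiconjBy_garsideProd le_rfl (by rw [Fin.val_rev]; omega)

theorem garside_sq_mem_center (N : ℕ) : garside N ^ 2 ∈ Submonoid.center (BraidMonoid N) := by
  rw [Submonoid.mem_center_iff]
  intro x
  induction x using gen_mul_induction with
  | one => rw [one_mul, mul_one]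
  | gen_mul a x ih =>
    have hcomm : Commute (garside N ^ 2) (gen a) :=
      genSeq_val a ▸ (isBraidSeq_genSeq N).commute_garsideProd_sq a.2
    rw [mul_assoc, ih, hcomm.left_comm]

theorem gen_dvd_garside_sq (a : Fin N) : gen a ∣ garside N ^ 2 :=
  (gen_dvd_garside a).trans (dvd_pow_self _ two_ne_zero)

theorem isQuasiCentral_of_garside_mul (h : IsQuasiCentral (garside N * w)) :
    IsQuasiCentral w := by
  intro a
  obtain ⟨b, hb⟩ := h a.rev
  refine ⟨b, mul_left_cancel (a := garside N) ?_⟩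
  rw [← mul_assoc, (semiconjBy_garside a).eq, mul_assoc, hb, mul_assoc]

theorem mem_powers_garside_of_isQuasiCentral (hz : IsQuasiCentral z) :
    z ∈ Submonoid.powers (garside N) := by
  induction hlen : len z using Nat.strong_induction_on generalizing z with | _ l ih
  cases z using gen_mul_induction with
  | one => exact one_mem _
  | gen_mul a x =>
    have hgen := hz.gen_dvd_of_preconnected (pathGraph_cliqueFree_three N)
      (SimpleGraph.pathGraph_preconnected N) (dvd_mul_right (gen a) x)
    obtain ⟨w, hw⟩ := garside_dvd_of_forall_gen_dvd hgen
    obtain ⟨c, hc⟩ := gen_dvd_garside a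
    rw [hw] at hz hlen ⊢
    have hlt : len w < l := by
      rw [hc, len_mul, len_mul, len_gen] at hlen
      omega
    exact mul_mem (Submonoid.mem_powers _) (ih _ hlt (isQuasiCentral_of_garside_mul hz) rfl)

theorem semiconjBy_garside_pow_of_odd (hk : Odd k) (a : Fin N) :
    SemiconjBy (garside N ^ k) (gen a) (gen a.rev) := by
  obtain ⟨l, rfl⟩ := hk
  have heven : Commute (garside N ^ (2 * l)) (gen a.rev) := by
    rw [pow_mul]
    exact (Submonoid.mem_center_iff.1 (pow_mem (garside_sq_mem_center N) l) _).symm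
  rw [pow_succ]
  exact SemiconjBy.mul_left heven (semiconjBy_garside a)

theorem even_of_garside_pow_mem_center (hN : 2 ≤ N)
    (h : garside N ^ k ∈ Submonoid.center (BraidMonoid N)) : Even k := by
  by_contra hk
  have hflip (a : Fin N) : a.rev = a := by
    refine gen_injective (pathGraph_cliqueFree_three N)
      (mul_left_cancel (a := garside N ^ k) ?_)
    rw [← Submonoid.mem_center_iff.1 h]
    exact (semiconjBy_garside_pow_of_odd (Nat.not_even_iff_odd.1 hk) a).eq.symm
  have hval := congrArg Fin.val (hflip ⟨0, by omega⟩)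
  simp only [Fin.val_rev] at hval
  omega

theorem center_eq_powers_garside_sq (hN : 2 ≤ N) :
    Submonoid.center (BraidMonoid N) = Submonoid.powers (garside N ^ 2) := by
  refine le_antisymm (fun z hz => ?_) (Submonoid.powers_le.2 (garside_sq_mem_center N))
  have hqc : IsQuasiCentral z := fun a => ⟨a, Submonoid.mem_center_iff.1 hz (gen a)⟩
  obtain ⟨k, rfl⟩ := mem_powers_garside_of_isQuasiCentral hqc
  obtain ⟨l, rfl⟩ := (even_of_garside_pow_mem_center hN hz).exists_two_nsmul
  exact ⟨l, (pow_mul _ 2 l).symm⟩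

end BraidMonoid

theorem map_val_filter_finRange_le {N : ℕ} (k : Fin N) :
    ((List.finRange N).filter (· ≤ k)).map Fin.val = List.range (k + 1) := by
  refine List.SortedLT.eq_of_mem_iff ?_ (List.sortedLT_range _) fun i => ?_
  · exact (((List.pairwise_lt_finRange N).filter _).map Fin.val fun _ _ h => h).sortedLT
  · simp only [List.mem_map, List.mem_filter, List.mem_finRange, decide_eq_true_eq, true_and,
      List.mem_range, Nat.lt_succ_iff]
    exact ⟨fun ⟨_, hj, hji⟩ => hji ▸ hj, fun hi => ⟨⟨i, hi.trans_lt k.2⟩, hi, rfl⟩⟩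

namespace BraidGroup

open ArtinMonoid BraidMonoid

variable {n : ℕ} {i j : Fin (n - 1)}

theorem σ_mul_σ_comm (h : (i : ℕ) + 1 < j) : (σ i : BraidGroup n) * σ j = σ j * σ i := by
  have hrel := PresentedGroup.one_of_mem (rels := braidRels n) (Or.inl ⟨i, j, h, rfl⟩)
  simp only [map_mul, map_inv] at hrel
  exact mul_inv_eq_iff_eq_mul.1 (mul_inv_eq_one.1 hrel)

theorem σ_braid (h : (i : ℕ) + 1 = j) : (σ i : BraidGroup n) * σ j * σ i = σ j * σ i * σ j := by
  have hrel := PresentedGroup.one_of_mem (rels := braidRels n) (Or.inr ⟨i, j, h, rfl⟩)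
  rw [map_mul, map_inv, mul_inv_eq_one] at hrel
  simp only [map_mul] at hrel
  exact hrel

theorem lift_σ_eq_of_artinRel {u v : FreeMonoid (Fin (n - 1))}
    (h : ArtinRel (SimpleGraph.pathGraph (n - 1)) u v) :
    FreeMonoid.lift (σ (n := n)) u = FreeMonoid.lift σ v := by
  cases h with
  | @comm i j h =>
    rw [SimpleGraph.pathGraph_adj, not_or] at h
    simp only [map_mul, FreeMonoid.lift_eval_of]
    rcases lt_trichotomy (i : ℕ) j with hij | hij | hij
    · exact σ_mul_σ_comm (by omega)
    · rw [Fin.ext hij]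
    · exact (σ_mul_σ_comm (by omega)).symm
  | braid h =>
    simp only [map_mul, FreeMonoid.lift_eval_of, ← mul_assoc]
    rcases SimpleGraph.pathGraph_adj.1 h with h | h
    · exact σ_braid h
    · exact (σ_braid h).symm

/-- The canonical homomorphism from positive braids to braids. -/
def ofMonoid (n : ℕ) : BraidMonoid (n - 1) →* BraidGroup n :=
  PresentedMonoid.lift σ fun _ _ => lift_σ_eq_of_artinRel

theorem ofMonoid_gen (i : Fin (n - 1)) : ofMonoid n (gen i) = σ i := rfl

theorem closure_range_ofMonoid (n : ℕ) :
    Subgroup.closure (Set.range (ofMonoid n)) = (⊤ : Subgroup (BraidGroup n)) := by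
  refine top_unique ((PresentedGroup.closure_range_of (braidRels n)).ge.trans
    (Subgroup.closure_mono ?_))
  rintro _ ⟨i, rfl⟩
  exact ⟨gen i, rfl⟩

theorem lift_eq_one_of_mem_braidRels {L : Type*} [Monoid L] {f : BraidMonoid (n - 1) →* L}
    {u : Fin (n - 1) → Lˣ} (hu : ∀ i, (u i : L) = f (gen i)) {r : FreeGroup (Fin (n - 1))}
    (hr : r ∈ braidRels n) : FreeGroup.lift u r = 1 := by
  obtain ⟨i, j, h, rfl⟩ | ⟨i, j, h, rfl⟩ := hr
  · have hcomm : ¬ (SimpleGraph.pathGraph (n - 1)).Adj i j := by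
      rw [SimpleGraph.pathGraph_adj]
      omega
    simp only [map_mul, map_inv, FreeGroup.lift_apply_of]
    rw [mul_inv_eq_one, mul_inv_eq_iff_eq_mul]
    ext
    simp only [Units.val_mul, hu, ← map_mul, gen_mul_gen_comm hcomm]
  · have hadj : (SimpleGraph.pathGraph (n - 1)).Adj i j := SimpleGraph.pathGraph_adj.2 (Or.inl h)
    simp only [map_mul, map_inv, FreeGroup.lift_apply_of]
    rw [mul_inv_eq_one]
    ext
    simp only [Units.val_mul, hu, ← map_mul, mul_assoc, gen_braid hadj]

theorem exists_units_hom_comp_ofMonoid_eq {L : Type*} [Monoid L] (f : BraidMonoid (n - 1) →* L)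
    (hf : ∀ i, IsUnit (f (gen i))) :
    ∃ F : BraidGroup n →* Lˣ, (Units.coeHom L).comp (F.comp (ofMonoid n)) = f := by
  choose u hu using hf
  let F : BraidGroup n →* Lˣ :=
    PresentedGroup.toGroup (f := u) fun _ => lift_eq_one_of_mem_braidRels hu
  have hF (i : Fin (n - 1)) : F (σ i) = u i := PresentedGroup.toGroup.of _
  refine ⟨F, PresentedMonoid.ext _ fun i => ?_⟩
  change (F (σ i) : L) = f (gen i)
  rw [hF, hu]

theorem ofMonoid_injective (n : ℕ) : Function.Injective (ofMonoid n) := by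
  have hcenter := garside_sq_mem_center (n - 1)
  obtain ⟨L, _, f, hf, hunit⟩ := exists_injective_isUnit_map_of_mem_center hcenter
  obtain ⟨F, rfl⟩ := exists_units_hom_comp_ofMonoid_eq f fun i =>
    isUnit_map_of_dvd_of_mem_center hcenter hunit (gen_dvd_garside_sq i)
  rw [← MonoidHom.comp_assoc, MonoidHom.coe_comp] at hf
  exact hf.of_comp

theorem σ_eq_ofMonoid_genSeq_comp_val (n : ℕ) :
    (σ : Fin (n - 1) → BraidGroup n) = (fun i => ofMonoid n (genSeq (n - 1) i)) ∘ Fin.val := by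
  funext i
  rw [Function.comp_apply, genSeq_val, ofMonoid_gen]

theorem prod_map_σ_finRange (n : ℕ) :
    ((List.finRange (n - 1)).map (σ (n := n))).prod =
      ofMonoid n (ascProd (genSeq (n - 1)) (n - 1)) := by
  rw [map_ascProd, ascProd, σ_eq_ofMonoid_genSeq_comp_val, ← List.map_map,
    List.map_coe_finRange_eq_range]

theorem halfTwist_eq_ofMonoid_garside (n : ℕ) : halfTwist n = ofMonoid n (garside (n - 1)) := by
  rw [garside, map_garsideProd, garsideProd, ← List.map_coe_finRange_eq_range, List.map_map,
    halfTwist]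
  congr 2
  funext k
  rw [Function.comp_apply, descProd, ← map_val_filter_finRange_le k, ← List.map_reverse,
    List.map_map, σ_eq_ofMonoid_genSeq_comp_val]

end BraidGroup

/-- In `B_n` (`n ≥ 3`), `Δ² = (σ₁σ₂⋯σ_{n-1})ⁿ`, and this element generates the center. -/
theorem center_braidGroup_eq_zpowers_fullTwist (n : ℕ) (hn : 3 ≤ n) :
    halfTwist n ^ 2 = (((List.finRange (n - 1)).map σ).prod) ^ n ∧
    Subgroup.center (BraidGroup n) = Subgroup.zpowers (halfTwist n ^ 2) := by
  rw [BraidGroup.halfTwist_eq_ofMonoid_garside, BraidGroup.prod_map_σ_finRange, ← map_pow,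
    ← map_pow]
  constructor
  · rw [BraidMonoid.garside, (BraidMonoid.isBraidSeq_genSeq (n - 1)).garsideProd_sq le_rfl,
      Nat.sub_add_cancel (by omega)]
  · have hdvd (m : BraidMonoid (n - 1)) : ∃ k : ℕ, m ∣ (BraidMonoid.garside (n - 1) ^ 2) ^ k :=
      exists_dvd_pow_of_closure_eq_top (PresentedMonoid.closure_range_of _)
        (BraidMonoid.garside_sq_mem_center _)
        (Set.forall_mem_range.2 BraidMonoid.gen_dvd_garside_sq) m
    exact center_eq_zpowers_map (BraidGroup.ofMonoid_injective n)
      (BraidGroup.closure_range_ofMonoid n) hdvd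
      (BraidMonoid.center_eq_powers_garside_sq (by omega))
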